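/- Let H be a Heisenberg group (a group whose commutator subgroup [H,H] is contained in its centre Z(H)) such that the centre Z(H) has finite index in H, and let χ : Z(H) → ℂˣ be a character with ker(χ) ∩ [H,H] = {1}. Then there exists an irreducible complex representation of H with central character χ, and any two irreducible complex representations of H with central character χ are isomorphic as representations of H. -/

import Mathlib

/-- A submodule is invariant under a representation. -/
def Representation.IsInvariantSubmodule {H V : Type*} [Group H] [AddCommGroup V] [Module ℂ V]
    (π : Representation ℂ H V) (W : Submodule ℂ V) : Prop :=
  ∀ (h : H) (v : V), v ∈ W → π h v ∈ W

/-- A representation is irreducible: the space is nonzero and the only invariant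
subspaces are `⊥` and `⊤`. -/
def Representation.IsIrreducibleRep {H V : Type*} [Group H] [AddCommGroup V] [Module ℂ V]
    (π : Representation ℂ H V) : Prop :=
  Nontrivial V ∧ ∀ W : Submodule ℂ V, π.IsInvariantSubmodule W → W = ⊥ ∨ W = ⊤

/-- A representation has central character `χ` if every central element acts by the
corresponding scalar. -/
def Representation.HasCentralCharacter {H V : Type*} [Group H] [AddCommGroup V] [Module ℂ V]
    (π : Representation ℂ H V) (χ : Subgroup.center H →* ℂˣ) : Prop :=
  ∀ (z : Subgroup.center H) (v : V), π (z : H) v = (χ z : ℂ) • v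

/-!
The centre acts trivially by conjugation on the linear maps `V₁ → V₂` between two representations
with the same central character `χ`, so `H / Z(H)` acts on them, and the sum over an orbit is an
intertwining map. Replacing `T` by `T ∘ ρ₁ a` multiplies the summand at `q` by `χ ⁅q, a⁆`. The
characters `χ ⁅q, ·⁆` of `H` are pairwise distinct because `χ` is faithful on `[H, H]`, so by
Dedekind's theorem the sums cannot vanish for all `a`: there is a nonzero intertwining map, which
is an isomorphism when `V₁` and `V₂` are irreducible.

For existence, take a simple quotient of a cyclic submodule of the representation coinduced
from `χ`; the centre still acts on it by `χ`.
-/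

universe u v w₁ w₂

namespace StoneVonNeumann

open Representation
open scoped commutatorElement MonoidAlgebra

section CommutatorPairing

variable {H A : Type*} [Group H] [CommGroup A]

theorem commutatorElement_mem_center (hHeis : commutator H ≤ Subgroup.center H) (g a : H) :
    ⁅g, a⁆ ∈ Subgroup.center H :=
  hHeis (Subgroup.commutator_mem_commutator (Subgroup.mem_top g) (Subgroup.mem_top a))

theorem conj_commutatorElement (hHeis : commutator H ≤ Subgroup.center H) (x g a : H) :
    x * ⁅g, a⁆ * x⁻¹ = ⁅g, a⁆ :=
  mul_inv_eq_of_eq_mul (Subgroup.mem_center_iff.1 (commutatorElement_mem_center hHeis g a) x)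

/-- The bimultiplicative pairing `(g, a) ↦ χ ⁅g, a⁆` on a Heisenberg group. -/
def commutatorPairing (hHeis : commutator H ≤ Subgroup.center H) (χ : Subgroup.center H →* A) :
    H →* H →* A :=
  MonoidHom.mk'
    (fun g ↦ MonoidHom.mk' (fun a ↦ χ ⟨⁅g, a⁆, commutatorElement_mem_center hHeis g a⟩)
      fun a b ↦ by
        rw [← map_mul]
        congr 2
        rw [commutatorElement_mul_right_eq_mul_conj, mul_assoc ⁅g, a⁆, mul_assoc ⁅g, a⁆,
          conj_commutatorElement hHeis])
    fun g h ↦ MonoidHom.ext fun a ↦ by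
      simp only [MonoidHom.mk'_apply, MonoidHom.mul_apply]
      rw [mul_comm, ← map_mul]
      congr 2
      rw [commutatorElement_mul_left_eq_conj_mul, conj_commutatorElement hHeis]

theorem commutatorPairing_apply (hHeis : commutator H ≤ Subgroup.center H)
    (χ : Subgroup.center H →* A) (g a : H) :
    commutatorPairing hHeis χ g a = χ ⟨⁅g, a⁆, commutatorElement_mem_center hHeis g a⟩ :=
  rfl

theorem center_le_ker_commutatorPairing (hHeis : commutator H ≤ Subgroup.center H)
    (χ : Subgroup.center H →* A) : Subgroup.center H ≤ (commutatorPairing hHeis χ).ker := by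
  intro z hz
  ext a
  have hza : (⟨⁅z, a⁆, commutatorElement_mem_center hHeis z a⟩ : Subgroup.center H) = 1 :=
    Subtype.ext (commutatorElement_eq_one_iff_mul_comm.2 (Subgroup.mem_center_iff.1 hz a).symm)
  rw [commutatorPairing_apply, hza, map_one, MonoidHom.one_apply]

theorem ker_commutatorPairing (hHeis : commutator H ≤ Subgroup.center H)
    {χ : Subgroup.center H →* A}
    (hker : ∀ h ∈ commutator H, ∀ hz : h ∈ Subgroup.center H, χ ⟨h, hz⟩ = 1 → h = 1) :
    (commutatorPairing hHeis χ).ker = Subgroup.center H := by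
  refine le_antisymm (fun g hg ↦ Subgroup.mem_center_iff.2 fun a ↦ Eq.symm ?_)
    (center_le_ker_commutatorPairing hHeis χ)
  rw [← commutatorElement_eq_one_iff_mul_comm]
  exact hker _ (Subgroup.commutator_mem_commutator (Subgroup.mem_top g) (Subgroup.mem_top a)) _
    (DFunLike.congr_fun hg a)

/-- The commutator pairing, seen as sending an element of `H / Z(H)` to a character of `H`,
with distinct elements giving distinct characters when `χ` is faithful on `[H, H]`. -/
def commutatorCharacter (hHeis : commutator H ≤ Subgroup.center H) (χ : Subgroup.center H →* A) :
    H ⧸ Subgroup.center H →* H →* A :=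
  QuotientGroup.lift _ (commutatorPairing hHeis χ) (center_le_ker_commutatorPairing hHeis χ)

theorem commutatorCharacter_injective (hHeis : commutator H ≤ Subgroup.center H)
    {χ : Subgroup.center H →* A}
    (hker : ∀ h ∈ commutator H, ∀ hz : h ∈ Subgroup.center H, χ ⟨h, hz⟩ = 1 → h = 1) :
    Function.Injective (commutatorCharacter hHeis χ) :=
  (QuotientGroup.injective_lift_iff _ _ _).2 (ker_commutatorPairing hHeis hker).symm

end CommutatorPairing

theorem eq_zero_of_forall_sum_monoidHom_smul_eq_zero {ι G k M : Type*} [Fintype ι] [Monoid G]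
    [Field k] [AddCommGroup M] [Module k M] {c : ι → G →* k} (hc : Function.Injective c)
    {m : ι → M} (h : ∀ a, ∑ i, c i a • m i = 0) (i : ι) : m i = 0 := by
  rw [← Module.forall_dual_apply_eq_zero_iff k]
  intro φ
  have hli : LinearIndependent k fun i ↦ (c i : G → k) :=
    (linearIndependent_monoidHom G k).comp c hc
  refine Fintype.linearIndependent_iff.1 hli (fun i ↦ φ (m i)) (funext fun a ↦ ?_) i
  simpa [mul_comm] using congr(φ $(h a))

section CentralCharacter

variable {k H V V₁ V₂ : Type*} [CommRing k] [Group H]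
  [AddCommGroup V] [Module k V] [AddCommGroup V₁] [Module k V₁] [AddCommGroup V₂] [Module k V₂]
  {χ : Subgroup.center H →* kˣ} {ρ : Representation k H V}
  {ρ₁ : Representation k H V₁} {ρ₂ : Representation k H V₂}

/-- The representation `ρ` has central character `χ`: the version over a commutative ring of
`Representation.HasCentralCharacter`. -/
def CenterActsBy (ρ : Representation k H V) (χ : Subgroup.center H →* kˣ) : Prop :=
  ∀ (z : Subgroup.center H) (v : V), ρ z v = (χ z : k) • v

theorem isTrivial_linHom_center (h₁ : CenterActsBy ρ₁ χ) (h₂ : CenterActsBy ρ₂ χ) :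
    IsTrivial ((linHom ρ₁ ρ₂).comp (Subgroup.center H).subtype) where
  out z := by
    ext T v
    have h₁' : ρ₁ (z : H)⁻¹ v = (χ z⁻¹ : k) • v := h₁ z⁻¹ v
    simp [h₁', h₂ z, smul_smul]

/-- The conjugation action of `H / Z(H)` on the linear maps between two representations with the
same central character. Its invariants are the intertwining maps. -/
def conjLinHom (h₁ : CenterActsBy ρ₁ χ) (h₂ : CenterActsBy ρ₂ χ) :
    Representation k (H ⧸ Subgroup.center H) (V₁ →ₗ[k] V₂) :=
  have := isTrivial_linHom_center h₁ h₂
  ofQuotient (linHom ρ₁ ρ₂) (Subgroup.center H)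

theorem apply_apply_inv_eq_commutatorPairing_smul (hHeis : commutator H ≤ Subgroup.center H)
    (h : CenterActsBy ρ χ) (g a : H) (v : V) :
    ρ a (ρ g⁻¹ v) = (commutatorPairing hHeis χ g a : k) • ρ g⁻¹ (ρ a v) := by
  have hag : a * g⁻¹ = ⁅g, a⁆ * (g⁻¹ * a) := by
    rw [← mul_assoc, ← Subgroup.mem_center_iff.1 (commutatorElement_mem_center hHeis g a),
      commutatorElement_def]
    group
  rw [← Module.End.mul_apply, ← map_mul, hag, map_mul, Module.End.mul_apply, map_mul,
    Module.End.mul_apply, commutatorPairing_apply, ← h]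

theorem conjLinHom_comp_apply (hHeis : commutator H ≤ Subgroup.center H)
    (h₁ : CenterActsBy ρ₁ χ) (h₂ : CenterActsBy ρ₂ χ)
    (q : H ⧸ Subgroup.center H) (a : H) (T : V₁ →ₗ[k] V₂) :
    conjLinHom h₁ h₂ q (T ∘ₗ ρ₁ a) =
      (commutatorCharacter hHeis χ q a : k) • (conjLinHom h₁ h₂ q T ∘ₗ ρ₁ a) := by
  induction q using QuotientGroup.induction_on with | H g => ?_
  ext v
  change ρ₂ g (T (ρ₁ a (ρ₁ g⁻¹ v))) =
    (commutatorPairing hHeis χ g a : k) • ρ₂ g (T (ρ₁ g⁻¹ (ρ₁ a v)))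
  rw [apply_apply_inv_eq_commutatorPairing_smul hHeis h₁, map_smul, map_smul]

theorem isIntertwiningMap_norm_conjLinHom [Fintype (H ⧸ Subgroup.center H)]
    (h₁ : CenterActsBy ρ₁ χ) (h₂ : CenterActsBy ρ₂ χ) (T : V₁ →ₗ[k] V₂) :
    IsIntertwiningMap ρ₁ ρ₂ ((conjLinHom h₁ h₂).norm T) :=
  (mem_linHom_invariants_iff_isIntertwining _).1 fun g ↦
    (conjLinHom h₁ h₂).self_norm_apply g T

end CentralCharacter

section Uniqueness

variable {k H V₁ V₂ : Type*} [Field k] [Group H]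
  [AddCommGroup V₁] [Module k V₁] [AddCommGroup V₂] [Module k V₂]
  {χ : Subgroup.center H →* kˣ} {ρ₁ : Representation k H V₁} {ρ₂ : Representation k H V₂}

theorem norm_conjLinHom_ne_zero [Fintype (H ⧸ Subgroup.center H)] [Nontrivial V₁] [Nontrivial V₂]
    (hHeis : commutator H ≤ Subgroup.center H)
    (hker : ∀ h ∈ commutator H, ∀ hz : h ∈ Subgroup.center H, χ ⟨h, hz⟩ = 1 → h = 1)
    (h₁ : CenterActsBy ρ₁ χ) (h₂ : CenterActsBy ρ₂ χ) :
    (conjLinHom h₁ h₂).norm ≠ 0 := by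
  intro hnorm
  obtain ⟨T, hT⟩ := exists_ne (0 : V₁ →ₗ[k] V₂)
  have twisted_sum (a : H) :
      ∑ q, (commutatorCharacter hHeis χ q a : k) • conjLinHom h₁ h₂ q T = 0 := by
    rw [← LinearMap.cancel_right (ρ₁.apply_bijective a).surjective, LinearMap.zero_comp]
    calc (∑ q, (commutatorCharacter hHeis χ q a : k) • conjLinHom h₁ h₂ q T) ∘ₗ ρ₁ a
        = (conjLinHom h₁ h₂).norm (T ∘ₗ ρ₁ a) := by
          ext v
          simp [Representation.norm, conjLinHom_comp_apply hHeis]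
      _ = 0 := by rw [hnorm, LinearMap.zero_apply]
  have characters_injective : Function.Injective fun q ↦
      (Units.coeHom k).comp (commutatorCharacter hHeis χ q) := fun q q' h ↦
    commutatorCharacter_injective hHeis hker <| MonoidHom.ext fun a ↦
      Units.ext (DFunLike.congr_fun h a)
  have h_one := eq_zero_of_forall_sum_monoidHom_smul_eq_zero characters_injective twisted_sum 1
  exact hT (by simpa using h_one)

theorem nonempty_equiv_of_isIrreducible [(Subgroup.center H).FiniteIndex]
    (hHeis : commutator H ≤ Subgroup.center H)
    (hker : ∀ h ∈ commutator H, ∀ hz : h ∈ Subgroup.center H, χ ⟨h, hz⟩ = 1 → h = 1)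
    [ρ₁.IsIrreducible] [ρ₂.IsIrreducible]
    (h₁ : CenterActsBy ρ₁ χ) (h₂ : CenterActsBy ρ₂ χ) :
    Nonempty (ρ₁.Equiv ρ₂) := by
  have := Subgroup.fintypeQuotientOfFiniteIndex (H := Subgroup.center H)
  have : Nontrivial V₁ := IsSimpleModule.nontrivial k[H] ρ₁.asModule
  have : Nontrivial V₂ := IsSimpleModule.nontrivial k[H] ρ₂.asModule
  obtain ⟨T, hT⟩ := DFunLike.ne_iff.1 (norm_conjLinHom_ne_zero hHeis hker h₁ h₂)
  let f : IntertwiningMap ρ₁ ρ₂ := LinearMap.intertwiningMap_of_isIntertwiningMap ρ₁ ρ₂ _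
    (isIntertwiningMap_norm_conjLinHom h₁ h₂ T).isIntertwining
  have hf : f ≠ 0 := fun h ↦ hT congr(($h).toLinearMap)
  exact ⟨f.ofBijective ((IsIrreducible.bijective_or_eq_zero f).resolve_right hf)⟩

end Uniqueness

section Existence

theorem nontrivial_coindV_subtype {k G A : Type*} [Semiring k] [Group G] [AddCommMonoid A]
    [Module k A] [Nontrivial A] (S : Subgroup G) (σ : Representation k S A) :
    Nontrivial (coindV S.subtype σ) := by
  classical
  obtain ⟨a, ha⟩ := exists_ne (0 : A)
  let f (g : G) : A := if hg : g ∈ S then σ ⟨g, hg⟩ a else 0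
  have f_equivariant : f ∈ coindV S.subtype σ := by
    rintro ⟨s, hs⟩ g
    by_cases hg : g ∈ S
    · have hsg : s * g ∈ S := mul_mem hs hg
      simp only [f, Subgroup.subtype_apply, dif_pos hg, dif_pos hsg]
      rw [← Module.End.mul_apply, ← map_mul]
      rfl
    · have hsg : s * g ∉ S := by rwa [Subgroup.mul_mem_cancel_left _ hs]
      simp [f, hg, hsg]
  have f_one : f 1 = a := (dif_pos S.one_mem).trans congr($(map_one σ) a)
  exact nontrivial_of_ne ⟨f, f_equivariant⟩ 0 fun h ↦
    ha (f_one.symm.trans (congr_fun (congr_arg Subtype.val h) 1))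

/-- The one-dimensional representation given by the character `χ`. -/
def characterRep {k G : Type*} [CommSemiring k] [Monoid G] (χ : G →* kˣ) : Representation k G k :=
  (Algebra.lmul k k).toMonoidHom.comp ((Units.coeHom k).comp χ)

theorem centerActsBy_coind {k H : Type*} [CommRing k] [Group H] (χ : Subgroup.center H →* kˣ) :
    CenterActsBy (coind (Subgroup.center H).subtype (characterRep χ)) χ := by
  refine fun z f ↦ Subtype.ext <| funext fun h ↦ ?_
  change f.1 (h * z) = χ z * f.1 h
  rw [Subgroup.mem_center_iff.1 z.2 h]
  exact f.2 z h

theorem asAlgebraHom_ofModule' {k G : Type*} [CommSemiring k] [Monoid G] (M : Type*)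
    [AddCommMonoid M] [Module k M] [Module k[G] M] [IsScalarTower k k[G] M] :
    (ofModule' (k := k) (G := G) M).asAlgebraHom = Algebra.lsmul k k M :=
  (MonoidAlgebra.lift k (M →ₗ[k] M) G).apply_symm_apply _

theorem isIrreducible_ofModule' {k G : Type*} [Field k] [Monoid G] (M : Type*)
    [AddCommGroup M] [Module k M] [Module k[G] M] [IsScalarTower k k[G] M]
    [IsSimpleModule k[G] M] :
    (ofModule' (k := k) (G := G) M).IsIrreducible := by
  let e : (ofModule' (k := k) (G := G) M).asModule ≃ₗ[k[G]] M :=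
    { (ofModule' M).asModuleEquiv with
      map_smul' r x := by
        change asModuleEquiv _ (r • x) = r • asModuleEquiv _ x
        rw [asModuleEquiv_map_smul, asAlgebraHom_ofModule', Algebra.lsmul_coe] }
  exact (irreducible_iff_isSimpleModule_asModule _).2 (IsSimpleModule.congr e)

theorem centerActsBy_ofModule'_quotient {k H : Type*} [CommRing k] [Group H]
    {χ : Subgroup.center H →* kˣ} {m : Ideal k[H]}
    (hm : ∀ z : Subgroup.center H,
      MonoidAlgebra.single (z : H) (1 : k) - algebraMap k k[H] (χ z) ∈ m) :
    CenterActsBy (ofModule' (k[H] ⧸ m)) χ := by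
  intro z x
  obtain ⟨a, rfl⟩ := Submodule.Quotient.mk_surjective m x
  have single_central : MonoidAlgebra.single (z : H) (1 : k) * a =
      a * MonoidAlgebra.single (z : H) (1 : k) :=
    MonoidAlgebra.single_commute (fun g ↦ (Subgroup.mem_center_iff.1 z.2 g).symm)
      Commute.one_left a
  calc ofModule' (k[H] ⧸ m) (z : H) (Submodule.Quotient.mk a)
      = Submodule.Quotient.mk (MonoidAlgebra.single (z : H) (1 : k) * a) := rfl
    _ = Submodule.Quotient.mk ((χ z : k) • a) := by
        rw [Submodule.Quotient.eq, single_central, Algebra.smul_def, Algebra.commutes, ← mul_sub]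
        exact m.mul_mem_left a (hm z)

variable {k : Type u} {H : Type v} [Field k] [Group H]

theorem exists_isIrreducible_of_centerActsBy {V : Type*} [AddCommGroup V] [Module k V]
    [Nontrivial V] {χ : Subgroup.center H →* kˣ} {ρ : Representation k H V}
    (h : CenterActsBy ρ χ) :
    ∃ (W : Type (max u v)) (_ : AddCommGroup W) (_ : Module k W) (σ : Representation k H W),
      σ.IsIrreducible ∧ CenterActsBy σ χ := by
  have : Nontrivial ρ.asModule := ‹Nontrivial V›
  obtain ⟨v, hv⟩ := exists_ne (0 : ρ.asModule)
  let I : Ideal k[H] := LinearMap.ker (LinearMap.toSpanSingleton k[H] ρ.asModule v)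
  have hI : I ≠ ⊤ := by
    rw [Ideal.ne_top_iff_one]
    simpa [I] using hv
  have hχ (z : Subgroup.center H) :
      MonoidAlgebra.single (z : H) (1 : k) - algebraMap k k[H] (χ z) ∈ I := by
    rw [LinearMap.mem_ker, LinearMap.toSpanSingleton_apply, sub_smul, sub_eq_zero,
      algebraMap_smul, Representation.single_smul, one_smul]
    exact h z v
  obtain ⟨m, hm, hIm⟩ := Ideal.exists_le_maximal I hI
  have : IsSimpleModule k[H] (k[H] ⧸ m) := isSimpleModule_iff_isCoatom.2 hm.out
  exact ⟨k[H] ⧸ m, inferInstance, inferInstance, ofModule' (k[H] ⧸ m),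
    isIrreducible_ofModule' _, centerActsBy_ofModule'_quotient fun z ↦ hIm (hχ z)⟩

theorem exists_isIrreducible_centerActsBy (χ : Subgroup.center H →* kˣ) :
    ∃ (V : Type (max u v)) (_ : AddCommGroup V) (_ : Module k V) (π : Representation k H V),
      π.IsIrreducible ∧ CenterActsBy π χ :=
  have := nontrivial_coindV_subtype _ (characterRep χ)
  exists_isIrreducible_of_centerActsBy (centerActsBy_coind χ)

end Existence

theorem isIrreducibleRep_iff_isIrreducible {H V : Type*} [Group H] [AddCommGroup V] [Module ℂ V]
    (π : Representation ℂ H V) : π.IsIrreducibleRep ↔ π.IsIrreducible where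
  mp := fun ⟨_, hπ⟩ ↦
    { exists_pair_ne := ⟨⊥, ⊤, fun h ↦ bot_ne_top (congr_arg Subrepresentation.toSubmodule h)⟩
      eq_bot_or_eq_top W := (hπ W.toSubmodule fun g _ hv ↦ W.apply_mem_toSubmodule g hv).imp
        (fun h ↦ Subrepresentation.toSubmodule_injective h)
        fun h ↦ Subrepresentation.toSubmodule_injective h }
  mpr _ := ⟨IsSimpleModule.nontrivial ℂ[H] π.asModule, fun W hW ↦
    (eq_bot_or_eq_top (⟨W, fun g _ ↦ hW g _⟩ : Subrepresentation π)).imp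
      (congr_arg Subrepresentation.toSubmodule) (congr_arg Subrepresentation.toSubmodule)⟩

end StoneVonNeumann

open StoneVonNeumann in
theorem stone_von_neumann_heisenberg_general {k : Type u} {H : Type v} [Field k] [Group H]
    [(Subgroup.center H).FiniteIndex] (hHeis : commutator H ≤ Subgroup.center H)
    (χ : Subgroup.center H →* kˣ)
    (hker : ∀ h ∈ commutator H, ∀ hz : h ∈ Subgroup.center H, χ ⟨h, hz⟩ = 1 → h = 1) :
    (∃ (V : Type (max u v)) (_ : AddCommGroup V) (_ : Module k V) (π : Representation k H V),
        π.IsIrreducible ∧ CenterActsBy π χ) ∧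
    (∀ (V₁ : Type w₁) (V₂ : Type w₂) (_ : AddCommGroup V₁) (_ : Module k V₁)
        (_ : AddCommGroup V₂) (_ : Module k V₂)
        (π₁ : Representation k H V₁) (π₂ : Representation k H V₂),
        π₁.IsIrreducible → CenterActsBy π₁ χ → π₂.IsIrreducible → CenterActsBy π₂ χ →
        Nonempty (π₁.Equiv π₂)) :=
  ⟨exists_isIrreducible_centerActsBy χ,
    fun _ _ _ _ _ _ _ _ _ h₁ _ h₂ ↦ nonempty_equiv_of_isIrreducible hHeis hker h₁ h₂⟩

/-- Stone–von Neumann theorem for Heisenberg groups with finite central quotient: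
existence and uniqueness of the irreducible representation with a given central
character `χ` satisfying `ker χ ∩ [H,H] = 1`. -/
theorem stone_von_neumann_heisenberg
    (H : Type) [Group H]
    (hHeis : commutator H ≤ Subgroup.center H)
    (hfin : (Subgroup.center H).FiniteIndex)
    (χ : Subgroup.center H →* ℂˣ)
    (hker : ∀ h ∈ commutator H, ∀ hz : h ∈ Subgroup.center H, χ ⟨h, hz⟩ = 1 → h = 1) :
    (∃ (V : Type) (_ : AddCommGroup V) (_ : Module ℂ V) (π : Representation ℂ H V),
        π.IsIrreducibleRep ∧ π.HasCentralCharacter χ) ∧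
    (∀ (V₁ V₂ : Type) (_ : AddCommGroup V₁) (_ : Module ℂ V₁)
        (_ : AddCommGroup V₂) (_ : Module ℂ V₂)
        (π₁ : Representation ℂ H V₁) (π₂ : Representation ℂ H V₂),
        π₁.IsIrreducibleRep → π₁.HasCentralCharacter χ →
        π₂.IsIrreducibleRep → π₂.HasCentralCharacter χ →
        ∃ e : V₁ ≃ₗ[ℂ] V₂, ∀ (h : H) (v : V₁), e (π₁ h v) = π₂ h (e v)) := by
  obtain ⟨⟨V, _, _, π, hπ, hχ⟩, unique⟩ := stone_von_neumann_heisenberg_general hHeis χ hker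
  refine ⟨⟨V, _, _, π, (StoneVonNeumann.isIrreducibleRep_iff_isIrreducible π).2 hπ, hχ⟩, ?_⟩
  intro V₁ V₂ _ _ _ _ π₁ π₂ hπ₁ hχ₁ hπ₂ hχ₂
  rw [StoneVonNeumann.isIrreducibleRep_iff_isIrreducible] at hπ₁ hπ₂
  obtain ⟨φ⟩ := unique V₁ V₂ _ _ _ _ π₁ π₂ hπ₁ hχ₁ hπ₂ hχ₂
  exact ⟨φ.toLinearEquiv, φ.isIntertwining⟩
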